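/- Let k be a positive integer, let G be a finite simple graph, let P = (X_1,…,X_l) be a path decomposition of G in which every bag has size at most k, and let S ⊆ V(G) be a bottleneck, i.e., the number of S-branches is at least 2k+1. Then at least one S-branch is an in-branch with respect to P. -/

import Mathlib

/-!
Every `s ∈ S` occupies an interval of bags, and `S ⊆ X t` for all `t` between the largest left end
`A` and the smallest right end `B` of these intervals. An `S`-branch `C` is adjacent to all of `S`,
so it shares a bag with each vertex of `S`; hence `A ≤ b(C)` and `a(C) ≤ B`. If `C` is not an
in-branch, then `a(C) < A` or `B < b(C)`, and `C` meets `X A` or `X B` because the bags meeting a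
connected set form an interval. Branches are pairwise disjoint, so each of these two bags meets at
most `k` of them, and at most `2k` branches fail to be in-branches.
-/

open SimpleGraph

variable {V : Type*}

/-- `N_G(Y)`: the set of vertices outside `Y` having a neighbor in `Y`. -/
def nbhdSet (G : SimpleGraph V) (Y : Set V) : Set V :=
  {v | v ∉ Y ∧ ∃ u ∈ Y, G.Adj u v}

/-- `C` is a connected component of the subgraph of `G` induced by `U`. -/
def IsCompIn (G : SimpleGraph V) (U C : Set V) : Prop :=
  C.Nonempty ∧ C ⊆ U ∧ (G.induce C).Connected ∧
    ∀ u ∈ C, ∀ v ∈ U, G.Adj u v → v ∈ C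

/-- `C` is a connected component of `G - S`. -/
def IsCompOf (G : SimpleGraph V) (S C : Set V) : Prop :=
  IsCompIn G Sᶜ C

/-- `C` is an `S`-branch: a connected component of `G - S` with `N_G(C) = S`. -/
def IsBranch (G : SimpleGraph V) (S C : Set V) : Prop :=
  IsCompOf G S C ∧ nbhdSet G C = S

/-- `S` is a bottleneck (for the width parameter `k`): a nonempty set with
at least `2k+1` `S`-branches. -/
def IsBottleneck (G : SimpleGraph V) (k : ℕ) (S : Set V) : Prop :=
  S.Nonempty ∧ 2 * k + 1 ≤ {C : Set V | IsBranch G S C}.ncard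

/-- `(X 0, …, X (l-1))` is a path decomposition of `G`. -/
def IsPathDecomp (G : SimpleGraph V) (l : ℕ) (X : ℕ → Set V) : Prop :=
  (∀ v, ∃ i < l, v ∈ X i) ∧
  (∀ u v, G.Adj u v → ∃ i < l, u ∈ X i ∧ v ∈ X i) ∧
  (∀ i j m, i ≤ j → j ≤ m → m < l → X i ∩ X m ⊆ X j)

/-- The width of a path decomposition: the maximum bag size minus one. -/
noncomputable def pdWidth (l : ℕ) (X : ℕ → Set V) : ℕ :=
  ((Finset.range l).sup fun i => (X i).ncard) - 1

/-- The set of indices of bags meeting the vertex set `C`. -/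
def supp (l : ℕ) (X : ℕ → Set V) (C : Set V) : Set ℕ :=
  {t | t < l ∧ (C ∩ X t).Nonempty}

/-- `a(C)`: the first index of a bag meeting `C`. -/
noncomputable def firstIdx (l : ℕ) (X : ℕ → Set V) (C : Set V) : ℕ :=
  sInf (supp l X C)

/-- `b(C)`: the last index of a bag meeting `C`. -/
noncomputable def lastIdx (l : ℕ) (X : ℕ → Set V) (C : Set V) : ℕ :=
  sSup (supp l X C)

/-- `C` is an in-branch of `S` with respect to the decomposition:
an `S`-branch with `S ⊆ X (a C)` and `S ⊆ X (b C)`. -/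
def IsInBranch (G : SimpleGraph V) (l : ℕ) (X : ℕ → Set V) (S C : Set V) : Prop :=
  IsBranch G S C ∧ S ⊆ X (firstIdx l X C) ∧ S ⊆ X (lastIdx l X C)

/-- `α(S)`: the minimum of `a(H)` over in-branches `H` of `S`. -/
noncomputable def botStart (G : SimpleGraph V) (l : ℕ) (X : ℕ → Set V) (S : Set V) : ℕ :=
  sInf {i | ∃ C, IsInBranch G l X S C ∧ i = firstIdx l X C}

/-- `β(S)`: the maximum of `b(H)` over in-branches `H` of `S`. -/
noncomputable def botEnd (G : SimpleGraph V) (l : ℕ) (X : ℕ → Set V) (S : Set V) : ℕ :=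
  sSup {i | ∃ C, IsInBranch G l X S C ∧ i = lastIdx l X C}

/-- The interval `I(S,P) = [α(S), β(S)]` of a bottleneck `S`. -/
noncomputable def botInterval (G : SimpleGraph V) (l : ℕ) (X : ℕ → Set V) (S : Set V) : Set ℕ :=
  Set.Icc (botStart G l X S) (botEnd G l X S)

/-- A pre-branch of `S`. -/
def IsPreBranch (G : SimpleGraph V) (l : ℕ) (X : ℕ → Set V) (S C : Set V) : Prop :=
  IsBranch G S C ∧ ¬ IsInBranch G l X S C ∧ firstIdx l X C < botStart G l X S

/-- A post-branch of `S`. -/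
def IsPostBranch (G : SimpleGraph V) (l : ℕ) (X : ℕ → Set V) (S C : Set V) : Prop :=
  IsBranch G S C ∧ ¬ IsInBranch G l X S C ∧
    botStart G l X S ≤ firstIdx l X C ∧ botEnd G l X S < lastIdx l X C

/-- `C` waits in the interval `[i, j]` of the decomposition. -/
def WaitsIn (X : ℕ → Set V) (C : Set V) (i j : ℕ) : Prop :=
  ∀ t, i ≤ t → t ≤ j → C ∩ X t = C ∩ X i

/-- The decomposition is `S`-structured: every component of `G - S` that is not an
`S`-branch, and every pre- or post-branch of `S`, waits in `I(S,P)`. -/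
def IsStructured (G : SimpleGraph V) (l : ℕ) (X : ℕ → Set V) (S : Set V) : Prop :=
  ∀ C : Set V,
    ((IsCompOf G S C ∧ ¬ IsBranch G S C) ∨ IsPreBranch G l X S C ∨ IsPostBranch G l X S C) →
    WaitsIn X C (botStart G l X S) (botEnd G l X S)

/-- The decomposition is `I`-connected: every connected component of the subgraph
induced by any prefix of bags contains a vertex of `I`. -/
def IsIConn (G : SimpleGraph V) (l : ℕ) (X : ℕ → Set V) (I : Set V) : Prop :=
  ∀ i < l, ∀ C : Set V, IsCompIn G {v | ∃ j ≤ i, v ∈ X j} C → (C ∩ I).Nonempty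

lemma encard_le_encard_of_pairwiseDisjoint {ι α : Type*} {I : Set ι} {f : ι → Set α} {Y : Set α}
    (hf : I.PairwiseDisjoint f) (hY : ∀ i ∈ I, (f i ∩ Y).Nonempty) : I.encard ≤ Y.encard := by
  choose g hgf hgY using hY
  refine Function.Embedding.encard_le ⟨fun i : I => ⟨g i i.2, hgY i i.2⟩, fun i j hij => ?_⟩
  have hg : g i i.2 = g j j.2 := congrArg Subtype.val hij
  exact Subtype.ext (hf.elim_set i.2 j.2 _ (hgf i i.2) (hg ▸ hgf j j.2))

section Components

variable {G : SimpleGraph V} {U C D : Set V}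

lemma subset_of_preconnected_induce (hC : (G.induce C).Preconnected) (hne : (C ∩ D).Nonempty)
    (hD : ∀ x ∈ C ∩ D, ∀ y ∈ C, G.Adj x y → y ∈ D) : C ⊆ D := by
  obtain ⟨v, hvC, hvD⟩ := hne
  intro w hwC
  by_contra hwD
  obtain ⟨p⟩ := hC ⟨v, hvC⟩ ⟨w, hwC⟩
  obtain ⟨d, -, hdD, hdD'⟩ := p.exists_boundary_dart (Subtype.val ⁻¹' D) hvD hwD
  exact hdD' (hD _ ⟨d.fst.2, hdD⟩ _ d.snd.2 d.adj)

lemma IsCompIn.subset_of_inter_nonempty (hC : IsCompIn G U C) (hD : IsCompIn G U D)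
    (hne : (C ∩ D).Nonempty) : C ⊆ D := by
  obtain ⟨-, hCU, hCconn, -⟩ := hC
  obtain ⟨-, -, -, hDclosed⟩ := hD
  exact subset_of_preconnected_induce hCconn.preconnected hne
    fun x hx y hy hxy => hDclosed x hx.2 y (hCU hy) hxy

lemma pairwiseDisjoint_isCompIn (G : SimpleGraph V) (U : Set V) :
    {C | IsCompIn G U C}.PairwiseDisjoint id := by
  intro C hC D hD hCD
  by_contra hdisj
  have hne : (C ∩ D).Nonempty := Set.not_disjoint_iff_nonempty_inter.1 hdisj
  exact hCD ((hC.subset_of_inter_nonempty hD hne).antisymm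
    (hD.subset_of_inter_nonempty hC (Set.inter_comm C D ▸ hne)))

lemma encard_isBranch_inter_nonempty_le (G : SimpleGraph V) (S Y : Set V) :
    {C | IsBranch G S C ∧ (C ∩ Y).Nonempty}.encard ≤ Y.encard :=
  encard_le_encard_of_pairwiseDisjoint
    ((pairwiseDisjoint_isCompIn G Sᶜ).subset fun _ hC => hC.1.1) fun _ hC => hC.2

end Components

section Supp

variable {l t : ℕ} {X : ℕ → Set V} {C D : Set V}

lemma bddAbove_supp (l : ℕ) (X : ℕ → Set V) (C : Set V) : BddAbove (supp l X C) :=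
  ⟨l, fun _ ht => ht.1.le⟩

lemma mem_supp_singleton {v : V} : t ∈ supp l X {v} ↔ t < l ∧ v ∈ X t :=
  and_congr_right' Set.singleton_inter_nonempty

lemma firstIdx_le (ht : t ∈ supp l X C) : firstIdx l X C ≤ t :=
  Nat.sInf_le ht

lemma le_lastIdx (ht : t ∈ supp l X C) : t ≤ lastIdx l X C :=
  le_csSup (bddAbove_supp l X C) ht

lemma firstIdx_le_lastIdx (h : (supp l X C ∩ supp l X D).Nonempty) :
    firstIdx l X C ≤ lastIdx l X D :=
  let ⟨_, hC, hD⟩ := h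
  (firstIdx_le hC).trans (le_lastIdx hD)

lemma firstIdx_mem_supp (h : (supp l X C).Nonempty) : firstIdx l X C ∈ supp l X C :=
  Nat.sInf_mem h

lemma lastIdx_mem_supp (h : (supp l X C).Nonempty) : lastIdx l X C ∈ supp l X C :=
  Nat.sSup_mem h (bddAbove_supp l X C)

end Supp

namespace IsPathDecomp

variable {G : SimpleGraph V} {l : ℕ} {X : ℕ → Set V} {S C : Set V}

lemma supp_nonempty (hP : IsPathDecomp G l X) (hC : C.Nonempty) : (supp l X C).Nonempty := by
  obtain ⟨v, hv⟩ := hC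
  obtain ⟨t, ht, hvt⟩ := hP.1 v
  exact ⟨t, ht, v, hv, hvt⟩

lemma ordConnected_supp (hP : IsPathDecomp G l X) (hC : (G.induce C).Preconnected) :
    (supp l X C).OrdConnected := by
  obtain ⟨-, hedge, hconv⟩ := hP
  refine ⟨fun i hi m hm j ⟨hij, hjm⟩ => ⟨hjm.trans_lt hm.1, ?_⟩⟩
  obtain ⟨-, u, huC, hui⟩ := hi
  obtain ⟨hml, w, hwC, hwm⟩ := hm
  by_contra hmiss
  have hnot : ∀ x ∈ C, x ∉ X j := fun x hx hxj => hmiss ⟨x, hx, hxj⟩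
  -- As `C` misses `X j`, no edge of `C` leaves the set of vertices occurring before bag `j`.
  have hbefore : C ⊆ {v | ∃ t ≤ j, v ∈ X t} := by
    refine subset_of_preconnected_induce hC ⟨u, huC, i, hij, hui⟩ ?_
    rintro x ⟨hxC, t, htj, hxt⟩ y - hxy
    obtain ⟨r, hrl, hxr, hyr⟩ := hedge x y hxy
    have hrj : r ≤ j := by
      by_contra! hjr
      exact hnot x hxC (hconv t j r htj hjr.le hrl ⟨hxt, hxr⟩)
    exact ⟨r, hrj, hyr⟩
  obtain ⟨t, htj, hwt⟩ := hbefore hwC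
  exact hnot w hwC (hconv t j m htj hjm hml ⟨hwt, hwm⟩)

lemma mem_bag_of_mem_Icc (hP : IsPathDecomp G l X) {v : V} {t : ℕ}
    (ht : t ∈ Set.Icc (firstIdx l X {v}) (lastIdx l X {v})) : v ∈ X t := by
  have hne := hP.supp_nonempty (Set.singleton_nonempty v)
  exact (mem_supp_singleton.1 ((hP.ordConnected_supp .of_subsingleton).out
    (firstIdx_mem_supp hne) (lastIdx_mem_supp hne) ht)).2

lemma exists_forall_mem_Icc_subset (hP : IsPathDecomp G l X) (hS : S.Nonempty) :
    ∃ s ∈ S, ∃ r ∈ S, ∀ t ∈ Set.Icc (firstIdx l X {s}) (lastIdx l X {r}), S ⊆ X t := by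
  have hne (v : V) : (supp l X {v}).Nonempty := hP.supp_nonempty (Set.singleton_nonempty v)
  have hfinite {f : V → ℕ} (hf : ∀ v, f v ∈ supp l X {v}) : (f '' S).Finite :=
    (Set.finite_Iio l).subset (Set.image_subset_iff.2 fun v _ => (hf v).1)
  obtain ⟨_, ⟨s, hs, rfl⟩, hmax⟩ := Set.exists_max_image _ id
    (hfinite fun v => firstIdx_mem_supp (hne v)) (hS.image _)
  obtain ⟨_, ⟨r, hr, rfl⟩, hmin⟩ := Set.exists_min_image _ id
    (hfinite fun v => lastIdx_mem_supp (hne v)) (hS.image _)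
  refine ⟨s, hs, r, hr, fun t ⟨hst, htr⟩ v hv => hP.mem_bag_of_mem_Icc ⟨?_, ?_⟩⟩
  · exact (hmax _ (Set.mem_image_of_mem _ hv)).trans hst
  · exact htr.trans (hmin _ (Set.mem_image_of_mem _ hv))

lemma supp_inter_supp_singleton_nonempty (hP : IsPathDecomp G l X) {v : V}
    (hv : v ∈ nbhdSet G C) : (supp l X C ∩ supp l X {v}).Nonempty := by
  obtain ⟨-, u, huC, huv⟩ := hv
  obtain ⟨t, ht, hut, hvt⟩ := hP.2.1 u v huv
  exact ⟨t, ⟨ht, u, huC, hut⟩, mem_supp_singleton.2 ⟨ht, hvt⟩⟩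

lemma mem_supp_or_mem_supp_of_not_isInBranch (hP : IsPathDecomp G l X) (hC : IsBranch G S C)
    {i j : ℕ} (hi : i ≤ lastIdx l X C) (hj : firstIdx l X C ≤ j)
    (hS : ∀ t ∈ Set.Icc i j, S ⊆ X t) (hnot : ¬ IsInBranch G l X S C) :
    i ∈ supp l X C ∨ j ∈ supp l X C := by
  obtain ⟨hCne, -, hCconn, -⟩ := hC.1
  have hne := hP.supp_nonempty hCne
  have hIcc : Set.Icc (firstIdx l X C) (lastIdx l X C) ⊆ supp l X C :=
    (hP.ordConnected_supp hCconn.preconnected).out (firstIdx_mem_supp hne) (lastIdx_mem_supp hne)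
  rcases le_total (firstIdx l X C) i with hai | hia
  · exact .inl (hIcc ⟨hai, hi⟩)
  rcases le_total j (lastIdx l X C) with hjb | hbj
  · exact .inr (hIcc ⟨hj, hjb⟩)
  exact absurd ⟨hC, hS _ ⟨hia, hj⟩, hS _ ⟨hi, hbj⟩⟩ hnot

lemma encard_not_isInBranch_le (hP : IsPathDecomp G l X) {k : ℕ∞}
    (hX : ∀ i < l, (X i).encard ≤ k) (S : Set V) :
    {C | IsBranch G S C ∧ ¬ IsInBranch G l X S C}.encard ≤ 2 * k := by
  rcases S.eq_empty_or_nonempty with rfl | hS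
  · simp [IsInBranch]
  obtain ⟨s, hs, r, hr, hsr⟩ := hP.exists_forall_mem_Icc_subset hS
  have hne (v : V) : (supp l X {v}).Nonempty := hP.supp_nonempty (Set.singleton_nonempty v)
  set A := firstIdx l X {s}
  set B := lastIdx l X {r}
  let meeting (Y : Set V) : Set (Set V) := {C | IsBranch G S C ∧ (C ∩ Y).Nonempty}
  have hcover : {C | IsBranch G S C ∧ ¬ IsInBranch G l X S C} ⊆
      meeting (X A) ∪ meeting (X B) := by
    rintro C ⟨hC, hnot⟩
    have hcommon {v : V} (hv : v ∈ S) : (supp l X C ∩ supp l X {v}).Nonempty :=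
      hP.supp_inter_supp_singleton_nonempty (hC.2.symm ▸ hv)
    have hA : A ≤ lastIdx l X C := firstIdx_le_lastIdx (Set.inter_comm _ _ ▸ hcommon hs)
    have hB : firstIdx l X C ≤ B := firstIdx_le_lastIdx (hcommon hr)
    exact (hP.mem_supp_or_mem_supp_of_not_isInBranch hC hA hB hsr hnot).imp
      (fun h => ⟨hC, h.2⟩) (fun h => ⟨hC, h.2⟩)
  calc {C | IsBranch G S C ∧ ¬ IsInBranch G l X S C}.encard
      ≤ (meeting (X A) ∪ meeting (X B)).encard := Set.encard_le_encard hcover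
    _ ≤ (meeting (X A)).encard + (meeting (X B)).encard := Set.encard_union_le _ _
    _ ≤ (X A).encard + (X B).encard :=
      add_le_add (encard_isBranch_inter_nonempty_le G S _) (encard_isBranch_inter_nonempty_le G S _)
    _ ≤ k + k :=
      add_le_add (hX A (firstIdx_mem_supp (hne s)).1) (hX B (lastIdx_mem_supp (hne r)).1)
    _ = 2 * k := (two_mul k).symm

end IsPathDecomp

/-- for a path decomposition with bags of size at most `k` and a
bottleneck `S`, at least one `S`-branch is an in-branch. -/
theorem stmt2 [Fintype V] (k : ℕ) (hk : 1 ≤ k) (G : SimpleGraph V) (l : ℕ)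
    (X : ℕ → Set V) (hP : IsPathDecomp G l X) (hw : ∀ i < l, (X i).ncard ≤ k)
    (S : Set V) (hS : IsBottleneck G k S) :
    ∃ C : Set V, IsInBranch G l X S C := by
  by_contra! hno
  have hX : ∀ i < l, (X i).encard ≤ k := fun i hi => by
    rw [← (X i).toFinite.cast_ncard_eq]
    exact_mod_cast hw i hi
  have hle : {C | IsBranch G S C}.encard ≤ 2 * k := by
    simpa only [hno, not_false_eq_true, and_true] using hP.encard_not_isInBranch_le hX S
  rw [← (Set.toFinite _).cast_ncard_eq] at hle
  have hncard : {C | IsBranch G S C}.ncard ≤ 2 * k := by exact_mod_cast hle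
  exact absurd (hS.2.trans hncard) (Nat.not_succ_le_self _)
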